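/- Let p > 1 and N ≥ m. Suppose A ∈ ℝ^{m×N} is such that every m×m submatrix of A is invertible, y ∈ ℝ^m is nonzero, and 0 < η < min{‖x‖_p : Ax = y}. Then the unique optimal solution x* of the problem min ‖Ax − y‖₂ subject to ‖x‖_p ≤ η satisfies |supp(x*)| ≥ N − m + 1. -/

import Mathlib

/-!
Let `r = A x' - y` be the residual and `c = Aᵀ r` the gradient (up to a factor 2) of the squared
objective at the optimum `x'`. Since `η` lies below every `‖x‖_p` with `A x = y`, `r ≠ 0`, and
invertibility of the `m × m` submatrices then forces `c` to vanish at fewer than `m` indices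
(`card_zeros_lt`).

It remains to see that `supp c ⊆ supp x'` (`grad_eq_zero_of_eq_zero`). If `x'_j = 0` but `c_j ≠ 0`,
move from `x'` along `d = -ε x' - c_j e_j`. For small `ε > 0` this is a descent direction. Shrinking
`x'` frees an amount of `‖·‖_p^p` linear in the step length `t`, while switching on coordinate `j`
costs only `O(t^p)`; as `p > 1`, small steps stay in the ball, contradicting optimality.
-/

open scoped BigOperators

/-- The `p`-norm (quasi-norm for `0 < p < 1`) on `ℝ^N`. -/
noncomputable def pnorm {N : ℕ} (p : ℝ) (x : Fin N → ℝ) : ℝ :=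
  (∑ i, |x i| ^ p) ^ (1 / p)

/-- The Euclidean norm on `ℝ^m`. -/
noncomputable def norm2 {m : ℕ} (v : Fin m → ℝ) : ℝ :=
  Real.sqrt (∑ i, v i ^ 2)

/-- Matrix-vector multiplication `A x` for `A ∈ ℝ^{m×N}`, `x ∈ ℝ^N`. -/
def mulVec' {m N : ℕ} (A : Fin m → Fin N → ℝ) (x : Fin N → ℝ) : Fin m → ℝ :=
  fun i => ∑ j, A i j * x j

/-- The number of nonzero entries of `x ∈ ℝ^N`, i.e. `|supp(x)|`. -/
noncomputable def suppCard {N : ℕ} (x : Fin N → ℝ) : ℕ :=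
  (Finset.univ.filter fun i => x i ≠ 0).card

lemma pnorm_le_iff {N : ℕ} {p η : ℝ} (hp : 1 < p) (hη : 0 < η) (x : Fin N → ℝ) :
    pnorm p x ≤ η ↔ ∑ i, |x i| ^ p ≤ η ^ p := by
  unfold pnorm
  rw [one_div]
  exact Real.rpow_inv_le_iff_of_pos
    (Finset.sum_nonneg fun i _ => Real.rpow_nonneg (abs_nonneg _) _) hη.le (by linarith)

/-- A vector orthogonal to `m` columns of `A` vanishes, hence `Aᵀ r` has fewer than `m` zeros. -/
lemma card_zeros_lt {m N : ℕ} (A : Fin m → Fin N → ℝ)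
    (hA : ∀ g : Fin m → Fin N, Function.Injective g →
      (Matrix.of fun i k => A i (g k)).det ≠ 0)
    (r : Fin m → ℝ) (hr : r ≠ 0) :
    (Finset.univ.filter fun j => ∑ i, r i * A i j = 0).card < m := by
  by_contra! h
  obtain ⟨t, ht, htc⟩ := Finset.exists_subset_card_eq h
  refine hr (Matrix.eq_zero_of_vecMul_eq_zero
    (hA (t.orderEmbOfFin htc) (t.orderEmbOfFin htc).injective) ?_)
  ext k
  have := ht (t.orderEmbOfFin_mem htc k)
  simpa [Matrix.vecMul, dotProduct] using this

/-- The gradient of the objective vanishes wherever the minimizer does, because for `p > 1` the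
`p`-norm ball is smooth across the coordinate hyperplanes. -/
lemma grad_eq_zero_of_eq_zero {m N : ℕ} (p : ℝ) (hp : 1 < p) (A : Fin m → Fin N → ℝ)
    (y : Fin m → ℝ) (η : ℝ) (hη : 0 < η) (x' : Fin N → ℝ)
    (hopt : pnorm p x' ≤ η ∧
      ∀ x, pnorm p x ≤ η → norm2 (mulVec' A x' - y) ≤ norm2 (mulVec' A x - y))
    (j : Fin N) (hj : x' j = 0) :
    ∑ i, (mulVec' A x' - y) i * A i j = 0 := by
  obtain ⟨hfeas, hmin⟩ := hopt
  rw [pnorm_le_iff hp hη] at hfeas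
  by_contra hc
  set r := mulVec' A x' - y with hr
  set c := ∑ i, r i * A i j with hcdef
  set K := ∑ i, r i * mulVec' A x' i with hK
  have hc2 : 0 < c ^ 2 := by positivity
  -- `ε` is chosen so small that `ε * |⟨r, A x'⟩| < c ^ 2`
  obtain ⟨ε, hε, hεK⟩ : ∃ ε : ℝ, 0 < ε ∧ -ε * K - c ^ 2 < 0 := by
    refine ⟨c ^ 2 / (|K| + 1), by positivity, ?_⟩
    have h1 : c ^ 2 / (|K| + 1) * (|K| + 1) = c ^ 2 := by field_simp
    have h2 : 0 < c ^ 2 / (|K| + 1) := by positivity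
    nlinarith [neg_abs_le K]
  set Ad : Fin m → ℝ := fun i => -ε * mulVec' A x' i - c * A i j with hAd
  set Q := ∑ i, Ad i ^ 2 with hQ
  have hE : 0 < η ^ p := Real.rpow_pos_of_pos hη p
  -- a step length `t` that is both feasible and short enough for descent
  obtain ⟨t, ht0, ht1, ht2, ht3⟩ : ∃ t : ℝ, 0 < t ∧ t * ε < 1 ∧
      t ^ (p - 1) * |c| ^ p < ε * η ^ p ∧ 2 * (-ε * K - c ^ 2) + t * Q < 0 := by
    have e1 : ∀ᶠ t : ℝ in nhds 0, t * ε < 1 :=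
      (by fun_prop : Continuous fun t : ℝ => t * ε).continuousAt.eventually_lt_const (by simp)
    have e2 : ∀ᶠ t : ℝ in nhds 0, t ^ (p - 1) * |c| ^ p < ε * η ^ p := by
      have hcont : Continuous fun t : ℝ => t ^ (p - 1) * |c| ^ p :=
        (Real.continuous_rpow_const (by linarith)).mul continuous_const
      refine hcont.continuousAt.eventually_lt_const ?_
      change (0 : ℝ) ^ (p - 1) * |c| ^ p < ε * η ^ p
      rw [Real.zero_rpow (by linarith)]
      simpa using mul_pos hε hE
    have e3 : ∀ᶠ t : ℝ in nhds 0, 2 * (-ε * K - c ^ 2) + t * Q < 0 :=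
      (by fun_prop : Continuous fun t : ℝ =>
        2 * (-ε * K - c ^ 2) + t * Q).continuousAt.eventually_lt_const (by linarith)
    have := (e1.and (e2.and e3)).filter_mono (nhdsWithin_le_nhds (s := Set.Ioi 0))
    obtain ⟨t, h, ht⟩ := (this.and self_mem_nhdsWithin).exists
    exact ⟨t, ht, h.1, h.2.1, h.2.2⟩
  let x : Fin N → ℝ := fun i => (1 - t * ε) * x' i - if i = j then t * c else 0
  have hxfeas : pnorm p x ≤ η := by
    rw [pnorm_le_iff hp hη]
    have hle : ∀ i, |x i| ^ p ≤ (1 - t * ε) * |x' i| ^ p + if i = j then (t * |c|) ^ p else 0 := by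
      intro i
      by_cases hi : i = j
      · subst hi
        simp [x, hj, abs_mul, abs_of_pos ht0, Real.zero_rpow (by linarith : p ≠ 0)]
      · simp only [x, hi, if_false, sub_zero, add_zero, abs_mul,
          abs_of_pos (by linarith : 0 < 1 - t * ε)]
        rw [Real.mul_rpow (by linarith) (abs_nonneg _)]
        refine mul_le_mul_of_nonneg_right ?_ (Real.rpow_nonneg (abs_nonneg _) _)
        exact Real.rpow_le_self_of_le_one (by linarith) (by nlinarith) hp.le
    have hsplit : (t * |c|) ^ p = t * (t ^ (p - 1) * |c| ^ p) := by
      rw [Real.mul_rpow ht0.le (abs_nonneg _), Real.rpow_sub_one ht0.ne']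
      field_simp
    calc ∑ i, |x i| ^ p
        ≤ ∑ i, ((1 - t * ε) * |x' i| ^ p + if i = j then (t * |c|) ^ p else 0) :=
          Finset.sum_le_sum fun i _ => hle i
      _ = (1 - t * ε) * ∑ i, |x' i| ^ p + (t * |c|) ^ p := by
          simp [Finset.sum_add_distrib, Finset.mul_sum]
      _ ≤ (1 - t * ε) * η ^ p + t * (ε * η ^ p) := by
          rw [hsplit]
          gcongr
      _ = η ^ p := by ring
  have hres : ∀ i, (mulVec' A x - y) i = r i + t * Ad i := by
    intro i
    have : mulVec' A x i = (1 - t * ε) * mulVec' A x' i - t * c * A i j := by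
      simp only [mulVec', x, mul_sub, Finset.sum_sub_distrib, Finset.mul_sum]
      congr 1
      · exact Finset.sum_congr rfl fun k _ => by ring
      · simp [mul_comm]
    simp only [Pi.sub_apply, this, hr, hAd]
    ring
  have hcross : ∑ i, r i * Ad i = -ε * K - c ^ 2 := by
    have : ∀ i, r i * Ad i = -ε * (r i * mulVec' A x' i) - c * (r i * A i j) := fun i => by
      simp only [hAd]; ring
    rw [Finset.sum_congr rfl fun i _ => this i, Finset.sum_sub_distrib, ← Finset.mul_sum,
      ← Finset.mul_sum, ← hK, ← hcdef]
    ring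
  have hexp : ∑ i, (mulVec' A x - y) i ^ 2
      = ∑ i, r i ^ 2 + t * (2 * (-ε * K - c ^ 2) + t * Q) := by
    have : ∀ i, (mulVec' A x - y) i ^ 2 = r i ^ 2 + 2 * t * (r i * Ad i) + t ^ 2 * Ad i ^ 2 :=
      fun i => by rw [hres]; ring
    rw [Finset.sum_congr rfl fun i _ => this i, Finset.sum_add_distrib, Finset.sum_add_distrib,
      ← Finset.mul_sum, ← Finset.mul_sum, hcross, ← hQ]
    ring
  have hge := hmin x hxfeas
  unfold norm2 at hge
  rw [Real.sqrt_le_sqrt_iff (Finset.sum_nonneg fun i _ => sq_nonneg _), hexp] at hge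
  linarith [mul_neg_of_pos_of_neg ht0 ht3]

/-- Sparsity lower bound for the second form of generalized basis pursuit denoising with
`p > 1`: if every `m×m` submatrix of `A` is invertible, `y ≠ 0`, and
`0 < η < min{‖x‖_p : Ax = y}`, then the (unique) optimal solution of
`min ‖Ax − y‖₂  s.t.  ‖x‖_p ≤ η` has at least `N - m + 1` nonzero entries. -/
theorem sparsity_lower_bound_BPDN2 {m N : ℕ} (hmN : m ≤ N) (p : ℝ) (hp : 1 < p)
    (A : Fin m → Fin N → ℝ)
    (hA : ∀ g : Fin m → Fin N, Function.Injective g →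
      (Matrix.of fun i k => A i (g k)).det ≠ 0)
    (y : Fin m → ℝ) (hy : y ≠ 0)
    (η : ℝ) (hη : 0 < η)
    (hηmin : ∀ x, mulVec' A x = y → η < pnorm p x)
    (x' : Fin N → ℝ)
    (hopt : pnorm p x' ≤ η ∧
      ∀ x, pnorm p x ≤ η → norm2 (mulVec' A x' - y) ≤ norm2 (mulVec' A x - y)) :
    N - m + 1 ≤ suppCard x' := by
  have hr : mulVec' A x' - y ≠ 0 := fun h =>
    absurd hopt.1 (not_le.mpr (hηmin x' (sub_eq_zero.mp h)))
  have hlt := card_zeros_lt A hA _ hr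
  have hsub : (Finset.univ.filter fun i => ¬ x' i ≠ 0).card ≤
      (Finset.univ.filter fun j => ∑ i, (mulVec' A x' - y) i * A i j = 0).card := by
    refine Finset.card_le_card fun j hj => ?_
    simp only [Finset.mem_filter, Finset.mem_univ, true_and, not_not] at hj ⊢
    exact grad_eq_zero_of_eq_zero p hp A y η hη x' hopt j hj
  have htot := Finset.card_filter_add_card_filter_not (s := (Finset.univ : Finset (Fin N)))
    (fun i => x' i ≠ 0)
  rw [Finset.card_univ, Fintype.card_fin] at htot
  unfold suppCard
  omega
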